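/- Let q > 0 and δ > 0 be real. Define β_0(t) = 1, β_n(t) = √q for n ≥ 1, α_0(t) = −1, α_1(t) = 0, and α_{n+1}(t) = n/(2(t+δ)) for n ≥ 1. Then for all t ≥ 0 and all n ≥ 1 these functions satisfy the extended relativistic Toda lattice equations with p = 1: β_n'(t) = β_n(t)·(α_n(t) − α_{n+1}(t)) + q·β_n(t)·( α_{n+1}(t)/(β_{n+1}(t)·β_n(t)) − α_n(t)/(β_n(t)·β_{n−1}(t)) ) and α_n'(t) = α_n(t)·(α_{n−1}(t) + β_{n−1}(t) − α_{n+1}(t) − β_n(t)) + q·α_n(t)·( 1/β_{n−1}(t) − 1/β_n(t) ). In particular β_n'(t) = 0 and α_n'(t) = −(n−1)/(2(t+δ)²) for n ≥ 2. -/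

import Mathlib

/-!
Once `β n = r` for all `n ≥ 1`, with `r ^ 2 = q`, the factors `q / (β (n + 1) * β n)` equal `1` and
the right-hand side of the `β`-equation cancels, while the `α`-equation reduces to the Volterra
lattice `α n' = α n * (α (n - 1) - α (n + 1))`. The values `α 0` and `β 0` occur only for `n = 1`,
multiplied by `α 1 = 0`. The separated ansatz `α (n + 1) = n * x` turns the Volterra lattice into
the Riccati equation `x' = -2 * x ^ 2`, which `x = 1 / (2 * (t + δ))` solves.
-/

theorem volterra_eq_of_linear {R : Type*} [CommRing R] {x : R} {α : ℕ → R}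
    (hα : ∀ n : ℕ, α (n + 1) = n * x) (n : ℕ) :
    α (n + 1) * (α n - α (n + 2)) = n * (-2 * x ^ 2) := by
  cases n with
  | zero => simp only [hα, Nat.cast_zero, zero_mul]
  | succ m =>
    simp only [hα]
    push_cast
    ring

section RightHandSides

variable {K : Type*} [Field K] {q r x : K} {β α : ℕ → K} {n : ℕ}

/-- The right-hand side of the `β n` equation of the extended relativistic Toda lattice with
`p = 1`, as a function of the values of the coefficients at a fixed time. It is meant for `1 ≤ n`:
at `n = 0` the index `n - 1` truncates. -/
def relTodaBeta (q : K) (β α : ℕ → K) (n : ℕ) : K :=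
  β n * (α n - α (n + 1)) +
    q * β n * (α (n + 1) / (β (n + 1) * β n) - α n / (β n * β (n - 1)))

/-- The right-hand side of the `α n` equation of the extended relativistic Toda lattice with
`p = 1`, under the same conventions as `relTodaBeta`. -/
def relTodaAlpha (q : K) (β α : ℕ → K) (n : ℕ) : K :=
  α n * (α (n - 1) + β (n - 1) - α (n + 1) - β n) + q * α n * (1 / β (n - 1) - 1 / β n)

theorem relTodaBeta_eq_zero_of_const (hr : r ≠ 0) (hq : r ^ 2 = q)
    (hβ : ∀ n, 1 ≤ n → β n = r) (hα : α 1 = 0) (hn : 1 ≤ n) : relTodaBeta q β α n = 0 := by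
  have h_cancel (a : K) : q * r * (a / (r * r)) = r * a := by
    rw [← hq]
    field_simp [hr]
  have hβ_succ : β (n + 1) = r := hβ (n + 1) (by omega)
  rw [relTodaBeta, hβ n hn, hβ_succ, mul_sub (q * r), h_cancel]
  obtain rfl | hn' := hn.eq_or_lt
  · rw [hα]
    ring
  · rw [hβ (n - 1) (by omega), h_cancel]
    ring

theorem relTodaAlpha_eq_volterra_of_const (hβ : ∀ n, 1 ≤ n → β n = r) (hα : α 1 = 0)
    (hn : 1 ≤ n) : relTodaAlpha q β α n = α n * (α (n - 1) - α (n + 1)) := by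
  obtain rfl | hn' := hn.eq_or_lt
  · simp only [relTodaAlpha, hα, mul_zero, zero_mul, add_zero]
  · rw [relTodaAlpha, hβ n hn, hβ (n - 1) (by omega)]
    ring

theorem relTodaAlpha_succ_of_const_of_linear (hβ : ∀ n, 1 ≤ n → β n = r)
    (hα : ∀ n : ℕ, α (n + 1) = n * x) (n : ℕ) :
    relTodaAlpha q β α (n + 1) = n * (-2 * x ^ 2) := by
  have hα1 : α 1 = 0 := by simpa using hα 0
  rw [relTodaAlpha_eq_volterra_of_const hβ hα1 n.succ_pos]
  exact volterra_eq_of_linear hα n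

end RightHandSides

section Solution

variable {𝕜 E : Type*} [NontriviallyNormedField 𝕜] [NontriviallyNormedField E] [NormedAlgebra 𝕜 E]
  [NeZero (2 : E)]

theorem hasDerivAt_inv_two_mul_add (δ : E) {t : 𝕜} (ht : algebraMap 𝕜 E t + δ ≠ 0) :
    HasDerivAt (fun u : 𝕜 ↦ (2 * (algebraMap 𝕜 E u + δ))⁻¹)
      (-2 * (2 * (algebraMap 𝕜 E t + δ))⁻¹ ^ 2) t := by
  have h_two : (2 : E) ≠ 0 := two_ne_zero
  have h_shift : HasDerivAt (fun u : 𝕜 ↦ algebraMap 𝕜 E u + δ) 1 t := by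
    simpa using (algebraMapCLM 𝕜 E).hasDerivAt.add_const δ
  convert (h_shift.const_mul 2).fun_inv (mul_ne_zero h_two ht) using 1
  field_simp

theorem stmt_12_general {q r δ : E} (hr : r ≠ 0) (hq : r ^ 2 = q) {β α : ℕ → 𝕜 → E}
    (hβ : ∀ n, 1 ≤ n → ∀ t, β n t = r) (hα1 : ∀ t, α 1 t = 0)
    (hα : ∀ n : ℕ, 1 ≤ n → ∀ t, α (n + 1) t = n / (2 * (algebraMap 𝕜 E t + δ)))
    {t : 𝕜} (ht : algebraMap 𝕜 E t + δ ≠ 0) {n : ℕ} (hn : 1 ≤ n) :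
    HasDerivAt (β n) (relTodaBeta q (β · t) (α · t) n) t ∧
      HasDerivAt (α n) (relTodaAlpha q (β · t) (α · t) n) t ∧
      HasDerivAt (β n) 0 t ∧
      HasDerivAt (α n) (-(((n : E) - 1) / (2 * (algebraMap 𝕜 E t + δ) ^ 2))) t := by
  have hα_linear (m : ℕ) (u : 𝕜) : α (m + 1) u = m * (2 * (algebraMap 𝕜 E u + δ))⁻¹ := by
    obtain rfl | hm := m.eq_zero_or_pos
    · simp [hα1]
    · rw [hα m hm, div_eq_mul_inv]
  have hβ_deriv : HasDerivAt (β n) 0 t := by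
    rw [funext (hβ n hn)]
    exact hasDerivAt_const t r
  have hβ_rhs : relTodaBeta q (β · t) (α · t) n = 0 :=
    relTodaBeta_eq_zero_of_const hr hq (fun k hk ↦ hβ k hk t) (hα1 t) hn
  obtain ⟨m, rfl⟩ := Nat.exists_eq_add_of_le' hn
  have hα_deriv : HasDerivAt (α (m + 1)) (m * (-2 * (2 * (algebraMap 𝕜 E t + δ))⁻¹ ^ 2)) t := by
    rw [funext (hα_linear m)]
    exact (hasDerivAt_inv_two_mul_add δ ht).const_mul (m : E)
  have hα_rhs : relTodaAlpha q (β · t) (α · t) (m + 1) =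
      m * (-2 * (2 * (algebraMap 𝕜 E t + δ))⁻¹ ^ 2) :=
    relTodaAlpha_succ_of_const_of_linear (fun k hk ↦ hβ k hk t) (fun k ↦ hα_linear k t) m
  refine ⟨hβ_rhs ▸ hβ_deriv, hα_rhs ▸ hα_deriv, hβ_deriv, ?_⟩
  have h_two : (2 : E) ≠ 0 := two_ne_zero
  convert hα_deriv using 1
  push_cast
  field_simp
  ring

end Solution

theorem stmt_12 (q δ : ℝ) (hq : 0 < q) (hδ : 0 < δ) (β α : ℕ → ℝ → ℂ)
    (hβ0 : ∀ t, β 0 t = 1)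
    (hβ : ∀ n, 1 ≤ n → ∀ t : ℝ, β n t = (Real.sqrt q : ℂ))
    (hα0 : ∀ t, α 0 t = -1) (hα1 : ∀ t, α 1 t = 0)
    (hα : ∀ n : ℕ, 1 ≤ n → ∀ t : ℝ, α (n + 1) t = (n : ℂ) / (2 * ((t : ℂ) + (δ : ℂ)))) :
    ∀ t : ℝ, 0 ≤ t → ∀ n, 1 ≤ n →
      (deriv (β n) t =
        β n t * (α n t - α (n + 1) t) +
          (q : ℂ) * β n t *
            (α (n + 1) t / (β (n + 1) t * β n t) - α n t / (β n t * β (n - 1) t))) ∧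
      (deriv (α n) t =
        α n t * (α (n - 1) t + β (n - 1) t - α (n + 1) t - β n t) +
          (q : ℂ) * α n t * (1 / β (n - 1) t - 1 / β n t)) ∧
      deriv (β n) t = 0 ∧
      (2 ≤ n → deriv (α n) t = -(((n : ℂ) - 1) / (2 * ((t : ℂ) + (δ : ℂ)) ^ 2))) := by
  intro t ht n hn
  have h_sqrt : (Real.sqrt q : ℂ) ≠ 0 := mod_cast (Real.sqrt_pos.2 hq).ne'
  have h_sq : (Real.sqrt q : ℂ) ^ 2 = q := mod_cast Real.sq_sqrt hq.le
  have h_shift : (t : ℂ) + δ ≠ 0 := mod_cast (add_pos_of_nonneg_of_pos ht hδ).ne'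
  obtain ⟨hβ_toda, hα_toda, hβ_zero, hα_formula⟩ :=
    stmt_12_general h_sqrt h_sq hβ hα1 hα h_shift hn
  exact ⟨hβ_toda.deriv, hα_toda.deriv, hβ_zero.deriv, fun _ ↦ hα_formula.deriv⟩
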